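/- (Chain rule) Let F : ℝ → ℝ be continuously differentiable with F' bounded, and let u ∈ 𝓗₀¹(Ω). Then F∘u ∈ 𝓗¹(Ω), and its weak derivatives satisfy y^{α₁}∂ₓ(F∘u) = y^{α₁} F'(u) ∂ₓu and x^{α₂}∂_y(F∘u) = x^{α₂} F'(u) ∂_yu almost everywhere in Ω. -/

import Mathlib

open MeasureTheory Set Filter

noncomputable section

/-- The open unit square `Ω = (0,1) × (0,1)` in `ℝ²`. -/
def Omega : Set (ℝ × ℝ) := Ioo (0:ℝ) 1 ×ˢ Ioo (0:ℝ) 1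

/-- Test functions on a set `s`: smooth with compact support contained in `s`. -/
def IsTestOn (s : Set (ℝ × ℝ)) (φ : ℝ × ℝ → ℝ) : Prop :=
  ContDiff ℝ (⊤ : ℕ∞) φ ∧ HasCompactSupport φ ∧ tsupport φ ⊆ s

/-- Classical partial derivative in the `x`-direction. -/
def pdx (φ : ℝ × ℝ → ℝ) (p : ℝ × ℝ) : ℝ := fderiv ℝ φ p (1, 0)

/-- Classical partial derivative in the `y`-direction. -/
def pdy (φ : ℝ × ℝ → ℝ) (p : ℝ × ℝ) : ℝ := fderiv ℝ φ p (0, 1)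

/-- `g` is a weak `x`-partial derivative of `u` on `s`. -/
def HasWeakDerivXOn (s : Set (ℝ × ℝ)) (u g : ℝ × ℝ → ℝ) : Prop :=
  LocallyIntegrableOn u s volume ∧ LocallyIntegrableOn g s volume ∧
  ∀ φ : ℝ × ℝ → ℝ, IsTestOn s φ →
    ∫ p in s, u p * pdx φ p = - ∫ p in s, g p * φ p

/-- `g` is a weak `y`-partial derivative of `u` on `s`. -/
def HasWeakDerivYOn (s : Set (ℝ × ℝ)) (u g : ℝ × ℝ → ℝ) : Prop :=
  LocallyIntegrableOn u s volume ∧ LocallyIntegrableOn g s volume ∧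
  ∀ φ : ℝ × ℝ → ℝ, IsTestOn s φ →
    ∫ p in s, u p * pdy φ p = - ∫ p in s, g p * φ p

/-- Test functions on `Ω`. -/
def IsTest (φ : ℝ × ℝ → ℝ) : Prop := IsTestOn Omega φ

/-- Membership in the weighted Sobolev space `𝓗¹(Ω)`, with weak derivatives `gx, gy`:
`u ∈ L²(Ω)`, `gx = ∂ₓu`, `gy = ∂_y u` weakly, and `y^α₁ gx, x^α₂ gy ∈ L²(Ω)`. -/
structure MemH1 (α₁ α₂ : ℝ) (u gx gy : ℝ × ℝ → ℝ) : Prop where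
  memL2 : MemLp u 2 (volume.restrict Omega)
  weakX : HasWeakDerivXOn Omega u gx
  weakY : HasWeakDerivYOn Omega u gy
  wgx : MemLp (fun p => p.2 ^ α₁ * gx p) 2 (volume.restrict Omega)
  wgy : MemLp (fun p => p.1 ^ α₂ * gy p) 2 (volume.restrict Omega)

/-- The `𝓗¹(Ω)` norm of `u` (with weak derivatives `gx, gy`). -/
def H1Norm (α₁ α₂ : ℝ) (u gx gy : ℝ × ℝ → ℝ) : ℝ :=
  Real.sqrt ((∫ p in Omega, (u p) ^ 2) +
    (∫ p in Omega, (p.2 ^ α₁ * gx p) ^ 2) +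
    (∫ p in Omega, (p.1 ^ α₂ * gy p) ^ 2))

/-- Membership in `𝓗₀¹(Ω)`: member of `𝓗¹(Ω)` approximable in the `𝓗¹` norm by
test functions. -/
def MemH10 (α₁ α₂ : ℝ) (u gx gy : ℝ × ℝ → ℝ) : Prop :=
  MemH1 α₁ α₂ u gx gy ∧
  ∀ ε : ℝ, 0 < ε → ∃ φ : ℝ × ℝ → ℝ, IsTest φ ∧
    H1Norm α₁ α₂ (fun p => u p - φ p) (fun p => gx p - pdx φ p)
      (fun p => gy p - pdy φ p) < ε

/-- Membership in `H₀(Ω) = {u ∈ 𝓗₀¹(Ω) : ∫_Ω V u² < ∞}`. -/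
def MemH0 (α₁ α₂ : ℝ) (V u gx gy : ℝ × ℝ → ℝ) : Prop :=
  MemH10 α₁ α₂ u gx gy ∧
  IntegrableOn (fun p => V p * (u p) ^ 2) Omega volume

/-- The bilinear form `a(u,v)` associated with the sub-elliptic operator with potential `V`. -/
def aForm (α₁ α₂ : ℝ) (V u gx gy v hx hy : ℝ × ℝ → ℝ) : ℝ :=
  ∫ p in Omega, ((p.2 ^ α₁ * gx p) * (p.2 ^ α₁ * hx p) +
    (p.1 ^ α₂ * gy p) * (p.1 ^ α₂ * hy p) + V p * u p * v p)

/-- The bilinear form `a₁(u,v)` (no potential). -/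
def a1Form (α₁ α₂ : ℝ) (u gx gy v hx hy : ℝ × ℝ → ℝ) : ℝ :=
  ∫ p in Omega, ((p.2 ^ α₁ * gx p) * (p.2 ^ α₁ * hx p) +
    (p.1 ^ α₂ * gy p) * (p.1 ^ α₂ * hy p))

/-- Membership in `S_p = {V ∈ L^p(Ω) : V ≥ 0 a.e., ‖V‖_{L^p(Ω)} ≤ M}`. -/
def MemSp (ppow M : ℝ) (V : ℝ × ℝ → ℝ) : Prop :=
  MemLp V (ENNReal.ofReal ppow) (volume.restrict Omega) ∧
  (∀ᵐ p ∂(volume.restrict Omega), 0 ≤ V p) ∧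
  eLpNorm V (ENNReal.ofReal ppow) (volume.restrict Omega) ≤ ENNReal.ofReal M

/-- `u` (with weak derivatives `gx, gy`) is an eigenfunction of the sub-elliptic operator
with potential `V` for the eigenvalue `lam`. -/
def IsEigenfun (α₁ α₂ : ℝ) (V : ℝ × ℝ → ℝ) (lam : ℝ) (u gx gy : ℝ × ℝ → ℝ) : Prop :=
  MemH0 α₁ α₂ V u gx gy ∧
  ∀ v hx hy : ℝ × ℝ → ℝ, MemH0 α₁ α₂ V v hx hy →
    aForm α₁ α₂ V u gx gy v hx hy = lam * ∫ p in Omega, u p * v p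

/-- The first eigenvalue `λ₁(V) = inf { a(u,u) : u ∈ H₀(Ω), ‖u‖_{L²} = 1 }`. -/
def lam1 (α₁ α₂ : ℝ) (V : ℝ × ℝ → ℝ) : ℝ :=
  sInf { r | ∃ u gx gy : ℝ × ℝ → ℝ, MemH0 α₁ α₂ V u gx gy ∧
    (∫ p in Omega, (u p) ^ 2) = 1 ∧ r = aForm α₁ α₂ V u gx gy u gx gy }

/-- `sup { a(u,u) : u ∈ span(φ), ‖u‖_{L²(Ω)} = 1 }` for a finite family `φ` with
weak derivatives `φx, φy`. -/
def rayleighSup (α₁ α₂ : ℝ) (V : ℝ × ℝ → ℝ) {k : ℕ} (φ φx φy : Fin k → ℝ × ℝ → ℝ) : ℝ :=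
  sSup { s | ∃ c : Fin k → ℝ,
    (∫ p in Omega, (∑ i, c i * φ i p) ^ 2) = 1 ∧
    s = aForm α₁ α₂ V (fun p => ∑ i, c i * φ i p) (fun p => ∑ i, c i * φx i p)
      (fun p => ∑ i, c i * φy i p) (fun p => ∑ i, c i * φ i p)
      (fun p => ∑ i, c i * φx i p) (fun p => ∑ i, c i * φy i p) }

/-- The set of values `sup { a(u,u) : u ∈ E, ‖u‖ = 1 }` over `k`-dimensional
subspaces `E` of `H₀(Ω)` (represented by `L²(Ω)`-linearly independent families of
`k` elements of `H₀(Ω)`). -/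
def minmaxSet (α₁ α₂ : ℝ) (V : ℝ × ℝ → ℝ) (k : ℕ) : Set ℝ :=
  { r | ∃ φ φx φy : Fin k → ℝ × ℝ → ℝ,
      (∀ i, MemH0 α₁ α₂ V (φ i) (φx i) (φy i)) ∧
      (∀ c : Fin k → ℝ, (∀ᵐ p ∂(volume.restrict Omega), ∑ i, c i * φ i p = 0) → c = 0) ∧
      r = rayleighSup α₁ α₂ V φ φx φy }

/-- The `k`-th eigenvalue via the min-max principle. -/
def lamk (α₁ α₂ : ℝ) (V : ℝ × ℝ → ℝ) (k : ℕ) : ℝ := sInf (minmaxSet α₁ α₂ V k)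

/-- Membership in `U = (𝓗₀¹(Ω) ∩ L^{2q}(Ω)) \ {0}`. -/
def MemU (α₁ α₂ qe : ℝ) (u gx gy : ℝ × ℝ → ℝ) : Prop :=
  MemH10 α₁ α₂ u gx gy ∧
  MemLp u (ENNReal.ofReal (2 * qe)) (volume.restrict Omega) ∧
  ¬ (∀ᵐ p ∂(volume.restrict Omega), u p = 0)

/-- The functional `J(u) = (a₁(u,u) + M ‖u‖_{L^{2q}(Ω)}²) / ‖u‖_{L²(Ω)}²`. -/
def Jfun (α₁ α₂ M qe : ℝ) (u gx gy : ℝ × ℝ → ℝ) : ℝ :=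
  (a1Form α₁ α₂ u gx gy u gx gy +
    M * (∫ p in Omega, |u p| ^ (2 * qe)) ^ (1 / qe)) / (∫ p in Omega, (u p) ^ 2)

open scoped Topology ENNReal

lemma aux_tendsto {μ : Measure (ℝ × ℝ)} {a b : ℕ → ℝ × ℝ → ℝ} {h : ℝ × ℝ → ℝ} {K : ℝ}
    (ha : ∀ n, AEStronglyMeasurable (a n) μ) (hh : MemLp h 2 μ)
    (hb : ∀ n, ∀ᵐ x ∂μ, ‖b n x‖ ≤ K * ‖a n x * h x‖)
    (hlim : Tendsto (fun n => eLpNorm (a n) 2 μ) atTop (𝓝 0)) :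
    Tendsto (fun n => ∫ x, b n x ∂μ) atTop (𝓝 0) := by
  have h1 : ∀ n, ‖∫ x, b n x ∂μ‖ₑ ≤ ENNReal.ofReal K * (eLpNorm (a n) 2 μ * eLpNorm h 2 μ) := by
    intro n
    calc ‖∫ x, b n x ∂μ‖ₑ ≤ ∫⁻ x, ‖b n x‖ₑ ∂μ := enorm_integral_le_lintegral_enorm _
      _ = eLpNorm (b n) 1 μ := (eLpNorm_one_eq_lintegral_enorm).symm
      _ ≤ ENNReal.ofReal K * eLpNorm (a n • h) 1 μ :=
        eLpNorm_le_mul_eLpNorm_of_ae_le_mul (hb n) 1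
      _ ≤ _ := by
        gcongr
        exact eLpNorm_smul_le_mul_eLpNorm hh.1 (ha n)
  have h2 : Tendsto (fun n => ENNReal.ofReal K * (eLpNorm (a n) 2 μ * eLpNorm h 2 μ)) atTop
      (𝓝 0) := by
    have := ENNReal.Tendsto.const_mul (a := ENNReal.ofReal K)
      (ENNReal.Tendsto.mul_const (b := eLpNorm h 2 μ) hlim (Or.inr hh.2.ne))
      (Or.inr ENNReal.ofReal_ne_top)
    simpa using this
  have h3 := tendsto_of_tendsto_of_tendsto_of_le_of_le tendsto_const_nhds h2
    (fun n => zero_le) h1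
  rw [tendsto_zero_iff_norm_tendsto_zero]
  have h4 := (ENNReal.tendsto_toReal (ENNReal.zero_ne_top)).comp h3
  simpa [Function.comp_def] using h4

lemma aux_eLp {μ : Measure (ℝ × ℝ)} {f : ℝ × ℝ → ℝ} (hf : MemLp f 2 μ) :
    eLpNorm f 2 μ = ENNReal.ofReal (Real.sqrt (∫ p, (f p) ^ 2 ∂μ)) := by
  rw [hf.eLpNorm_eq_integral_rpow_norm (by norm_num) (by norm_num), Real.sqrt_eq_rpow]
  simp

lemma measOmega : MeasurableSet Omega := measurableSet_Ioo.prod measurableSet_Ioo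
lemma openOmega : IsOpen Omega := isOpen_Ioo.prod isOpen_Ioo

lemma finOmega : IsFiniteMeasure ((volume : Measure (ℝ × ℝ)).restrict Omega) := by
  refine ⟨?_⟩
  rw [Measure.restrict_apply_univ, Omega, Measure.volume_eq_prod, Measure.prod_prod]
  simp

lemma aux_locint {F : ℝ → ℝ} (hF : ContDiff ℝ 1 F) {K : ℝ} (hK : ∀ t, |deriv F t| ≤ K)
    {u g : ℝ × ℝ → ℝ} (hu : AEStronglyMeasurable u (volume.restrict Omega))
    (hg : LocallyIntegrableOn g Omega volume) :
    LocallyIntegrableOn (fun p => deriv F (u p) * g p) Omega volume := by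
  rw [locallyIntegrableOn_iff openOmega.isLocallyClosed] at hg ⊢
  intro k hk hkc
  refine Integrable.bdd_mul (c := K) (hg k hk hkc) ?_ (ae_of_all _ fun x => hK _)
  exact ((hF.continuous_deriv le_rfl).comp_aestronglyMeasurable hu).mono_measure
    (Measure.restrict_mono hk le_rfl)

lemma aux_intmul {g ψ : ℝ × ℝ → ℝ} (hg : LocallyIntegrableOn g Omega volume)
    (hψc : Continuous ψ) (hψ : HasCompactSupport ψ) (hs : tsupport ψ ⊆ Omega) :
    Integrable (fun p => g p * ψ p) (volume.restrict Omega) := by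
  have h1 : IntegrableOn g (tsupport ψ) volume := hg.integrableOn_compact_subset hs hψ
  obtain ⟨C, hC⟩ := hψc.bounded_above_of_compact_support hψ
  have h2 : IntegrableOn (fun p => g p * ψ p) (tsupport ψ) volume :=
    Integrable.mul_bdd (c := C) h1 hψc.aestronglyMeasurable (ae_of_all _ hC)
  have h3 : Integrable (fun p => g p * ψ p) volume := by
    rw [← integrableOn_iff_integrable_of_support_subset (s := tsupport ψ)]
    · exact h2
    · intro x hx
      apply subset_tsupport
      intro h
      exact hx (by simp [h])
  exact h3.integrableOn

lemma aux_weak (v : ℝ × ℝ) (w : ℝ × ℝ → ℝ) (hw : Continuous w) (hw0 : ∀ p ∈ Omega, w p ≠ 0)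
    {F : ℝ → ℝ} (hF : ContDiff ℝ 1 F) {K : ℝ} (hK : ∀ t, |deriv F t| ≤ K)
    (hL : ∀ s t, |F s - F t| ≤ K * |s - t|)
    {u g : ℝ × ℝ → ℝ} (hu : MemLp u 2 (volume.restrict Omega))
    (hFu : MemLp (fun p => F (u p)) 2 (volume.restrict Omega))
    (hg : LocallyIntegrableOn g Omega volume)
    (hwg : AEStronglyMeasurable (fun p => w p * g p) (volume.restrict Omega))
    (φ : ℕ → ℝ × ℝ → ℝ) (hφ : ∀ n, IsTest (φ n))
    (l1 : Tendsto (fun n => eLpNorm (fun p => u p - φ n p) 2 (volume.restrict Omega)) atTop (𝓝 0))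
    (l2 : Tendsto (fun n => eLpNorm (fun p => w p * (g p - fderiv ℝ (φ n) p v)) 2
      (volume.restrict Omega)) atTop (𝓝 0))
    (ψ : ℝ × ℝ → ℝ) (hψ : IsTestOn Omega ψ) :
    ∫ p in Omega, F (u p) * fderiv ℝ ψ p v = - ∫ p in Omega, (deriv F (u p) * g p) * ψ p := by
  obtain ⟨hψs, hψc, hψO⟩ := hψ
  have hF'c : Continuous (deriv F) := hF.continuous_deriv le_rfl
  have hFc : Continuous F := hF.continuous
  have hFd : Differentiable ℝ F := hF.differentiable (by norm_num)
  have hψcont := hψs.continuous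
  have hdψ : Continuous (fun p => fderiv ℝ ψ p v) :=
    (hψs.continuous_fderiv (by simp)).clm_apply continuous_const
  have hdψc : HasCompactSupport (fun p => fderiv ℝ ψ p v) := hψc.fderiv_apply (𝕜 := ℝ) v
  have hφc : ∀ n, Continuous (φ n) := fun n => (hφ n).1.continuous
  have hdφ : ∀ n, Continuous (fun p => fderiv ℝ (φ n) p v) := fun n =>
    ((hφ n).1.continuous_fderiv (by simp)).clm_apply continuous_const
  have hdψL : MemLp (fun p => fderiv ℝ ψ p v) 2 (volume.restrict Omega) :=
    hdψ.memLp_of_hasCompactSupport hdψc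
  -- a.e. convergent subsequence
  have hmeas : TendstoInMeasure (volume.restrict Omega) φ atTop u := by
    refine tendstoInMeasure_of_tendsto_eLpNorm (p := 2) (by norm_num)
      (fun n => (hφc n).aestronglyMeasurable) hu.1 ?_
    refine l1.congr fun n => ?_
    rw [← eLpNorm_neg]
    congr 1
    ext p
    simp
  obtain ⟨ns, hns, hae⟩ := hmeas.exists_seq_tendsto_ae
  have l1' := l1.comp hns.tendsto_atTop
  have l2' := l2.comp hns.tendsto_atTop
  -- integration by parts
  have ibp : ∀ n, ∫ p in Omega, F (φ n p) * fderiv ℝ ψ p v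
      = - ∫ p in Omega, (deriv F (φ n p) * fderiv ℝ (φ n) p v) * ψ p := by
    intro n
    have hφd : Differentiable ℝ (φ n) := (hφ n).1.differentiable (by simp)
    have hfd : ∀ p, fderiv ℝ (fun p => F (φ n p)) p v
        = deriv F (φ n p) * fderiv ℝ (φ n) p v := by
      intro p
      have := ((hFd (φ n p)).hasDerivAt.comp_hasFDerivAt p (hφd p).hasFDerivAt).fderiv
      simp only [Function.comp_def] at this
      rw [this]
      simp
    rw [setIntegral_eq_integral_of_forall_compl_eq_zero,
      setIntegral_eq_integral_of_forall_compl_eq_zero]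
    · simp_rw [← hfd]
      refine integral_mul_fderiv_eq_neg_fderiv_mul_of_integrable ?_ ?_ ?_ ?_ ?_
      · simp_rw [hfd]
        exact Continuous.integrable_of_hasCompactSupport
          (((hF'c.comp (hφc n)).mul (hdφ n)).mul hψcont) hψc.mul_left
      · exact Continuous.integrable_of_hasCompactSupport
          ((hFc.comp (hφc n)).mul hdψ) hdψc.mul_left
      · exact Continuous.integrable_of_hasCompactSupport
          ((hFc.comp (hφc n)).mul hψcont) hψc.mul_left
      · exact fun x _ => (hFd.comp hφd) x
      · exact fun x _ => (hψs.differentiable (by simp)) x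
    · intro x hx
      rw [image_eq_zero_of_notMem_tsupport (fun h => hx (hψO h)), mul_zero]
    · intro x hx
      have : x ∉ tsupport (fun p => fderiv ℝ ψ p v) :=
        fun h => hx (hψO (tsupport_fderiv_apply_subset ℝ v h))
      rw [image_eq_zero_of_notMem_tsupport this, mul_zero]
  -- left limit
  have L : Tendsto (fun n => ∫ p in Omega, F (φ (ns n) p) * fderiv ℝ ψ p v) atTop
      (𝓝 (∫ p in Omega, F (u p) * fderiv ℝ ψ p v)) := by
    rw [← tendsto_sub_nhds_zero_iff]
    have h0 : Tendsto (fun n => ∫ p in Omega, (F (φ (ns n) p) - F (u p)) * fderiv ℝ ψ p v) atTop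
        (𝓝 0) := by
      refine aux_tendsto (K := K) (fun n => hu.1.sub (hφc (ns n)).aestronglyMeasurable) hdψL
        (fun n => ae_of_all _ fun x => ?_) l1'
      rw [norm_mul, norm_mul, ← mul_assoc]
      gcongr
      have := hL (φ (ns n) x) (u x)
      rw [abs_sub_comm (φ (ns n) x)] at this
      exact this
    refine h0.congr fun n => ?_
    rw [← integral_sub]
    · simp_rw [sub_mul]
    · exact (Continuous.integrable_of_hasCompactSupport
          ((hFc.comp (hφc (ns n))).mul hdψ) hdψc.mul_left).integrableOn
    · exact hFu.integrable_mul hdψL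
  -- right limit
  have hgψ := aux_intmul hg hψcont hψc hψO
  have hdm : ∀ n, AEStronglyMeasurable (fun p => deriv F (φ n p)) (volume.restrict Omega) :=
    fun n => (hF'c.comp (hφc n)).aestronglyMeasurable
  have R2 : Tendsto (fun n => ∫ p in Omega, deriv F (φ (ns n) p) * (g p * ψ p)) atTop
      (𝓝 (∫ p in Omega, deriv F (u p) * (g p * ψ p))) := by
    refine tendsto_integral_of_dominated_convergence (fun p => K * ‖g p * ψ p‖)
      (fun n => (hdm _).mul hgψ.1) (hgψ.norm.const_mul K) (fun n => ae_of_all _ fun x => ?_) ?_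
    · rw [norm_mul]
      gcongr
      exact hK _
    · filter_upwards [hae] with x hx
      exact ((hF'c.tendsto _).comp hx).mul_const _
  have hq : MemLp (fun p => ψ p / w p) 2 (volume.restrict Omega) := by
    have hsub : tsupport (fun p => ψ p / w p) ⊆ tsupport ψ := by
      apply closure_mono
      intro x hx h
      exact hx (by simp [h])
    refine Continuous.memLp_of_hasCompactSupport ?_
      (hψc.of_isClosed_subset (isClosed_tsupport _) hsub)
    exact continuous_of_tsupport fun x hx =>
      hψcont.continuousAt.div hw.continuousAt (hw0 x (hψO (hsub hx)))
  have R1 : Tendsto (fun n => ∫ p in Omega,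
      deriv F (φ (ns n) p) * ((fderiv ℝ (φ (ns n)) p v - g p) * ψ p)) atTop (𝓝 0) := by
    refine aux_tendsto (K := K) (a := fun n p => w p * (g p - fderiv ℝ (φ (ns n)) p v))
      (fun n => ?_) hq (fun n => ?_) l2'
    · simp_rw [mul_sub]
      exact hwg.sub (hw.mul (hdφ _)).aestronglyMeasurable
    · filter_upwards [ae_restrict_mem measOmega] with x hx
      have h0 := hw0 x hx
      have : w x * (g x - fderiv ℝ (φ (ns n)) x v) * (ψ x / w x)
          = - ((fderiv ℝ (φ (ns n)) x v - g x) * ψ x) := by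
        field_simp
        ring
      rw [this, norm_neg, norm_mul]
      gcongr
      exact hK _
  have R : Tendsto (fun n => ∫ p in Omega,
      (deriv F (φ (ns n) p) * fderiv ℝ (φ (ns n)) p v) * ψ p) atTop
      (𝓝 (∫ p in Omega, (deriv F (u p) * g p) * ψ p)) := by
    have := R1.add R2
    rw [zero_add] at this
    simp_rw [← mul_assoc (deriv F (u _))] at this
    refine this.congr fun n => ?_
    have hi2 : Integrable (fun p => deriv F (φ (ns n) p) * (g p * ψ p)) (volume.restrict Omega) :=
      hgψ.bdd_mul (c := K) (hdm _) (ae_of_all _ fun x => hK _)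
    have hi1 : Integrable (fun p => deriv F (φ (ns n) p) *
        ((fderiv ℝ (φ (ns n)) p v - g p) * ψ p)) (volume.restrict Omega) := by
      refine Integrable.bdd_mul (c := K) ?_ (hdm _) (ae_of_all _ fun x => hK _)
      simp_rw [sub_mul]
      refine Integrable.sub ?_ hgψ
      exact (Continuous.integrable_of_hasCompactSupport
          ((hdφ _).mul hψcont) hψc.mul_left).integrableOn
    rw [← integral_add hi1 hi2]
    congr 1
    ext p
    ring
  refine tendsto_nhds_unique L ?_
  simp_rw [ibp]
  exact R.neg

/-- Chain rule: if `F : ℝ → ℝ` is `C¹` with bounded derivative and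
`u ∈ 𝓗₀¹(Ω)` with weak derivatives `gx, gy`, then `F ∘ u ∈ 𝓗¹(Ω)` with weak
derivatives `F'(u) gx` and `F'(u) gy` (so that
`y^{α₁}∂ₓ(F∘u) = y^{α₁}F'(u)∂ₓu` and `x^{α₂}∂_y(F∘u) = x^{α₂}F'(u)∂_yu` a.e.). -/
theorem chain_rule_H1 (α₁ α₂ : ℝ)
    (hα₁ : α₁ ∈ Ioo (0:ℝ) (1/2)) (hα₂ : α₂ ∈ Ioo (0:ℝ) (1/2))
    (F : ℝ → ℝ) (hF : ContDiff ℝ 1 F) (hF' : ∃ K : ℝ, ∀ t : ℝ, |deriv F t| ≤ K)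
    (u gx gy : ℝ × ℝ → ℝ) (hu : MemH10 α₁ α₂ u gx gy) :
    MemH1 α₁ α₂ (fun p => F (u p)) (fun p => deriv F (u p) * gx p)
      (fun p => deriv F (u p) * gy p) := by
  obtain ⟨K, hK⟩ := hF'
  obtain ⟨⟨hu2, hX, hY, hwx, hwy⟩, happ⟩ := hu
  haveI := finOmega
  have hFd : Differentiable ℝ F := hF.differentiable (by norm_num)
  have hL : ∀ s t, |F s - F t| ≤ K * |s - t| := fun s t =>
    Convex.norm_image_sub_le_of_norm_deriv_le (s := univ) (fun x _ => hFd x) (fun x _ => hK x)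
      convex_univ (mem_univ t) (mem_univ s)
  have hFum : AEStronglyMeasurable (fun p => F (u p)) (volume.restrict Omega) :=
    hF.continuous.comp_aestronglyMeasurable hu2.1
  have hdm : AEStronglyMeasurable (fun p => deriv F (u p)) (volume.restrict Omega) :=
    (hF.continuous_deriv le_rfl).comp_aestronglyMeasurable hu2.1
  have hFu : MemLp (fun p => F (u p)) 2 (volume.restrict Omega) := by
    have h1 : MemLp (fun p => F (u p) - F 0) 2 (volume.restrict Omega) := by
      refine hu2.of_le_mul (c := K) (hFum.sub aestronglyMeasurable_const)
        (ae_of_all _ fun x => ?_)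
      simpa using hL (u x) 0
    have h2 := h1.add (memLp_const (F 0))
    refine h2.ae_eq (ae_of_all _ fun x => ?_)
    simp
  have hFl : LocallyIntegrableOn (fun p => F (u p)) Omega volume := by
    have : IntegrableOn (fun p => F (u p)) Omega volume := hFu.integrable (by norm_num)
    exact this.locallyIntegrableOn
  choose φ hφ hφn using fun n : ℕ => happ (1 / ((n : ℝ) + 1)) (by positivity)
  have hw1 : Continuous (fun p : ℝ × ℝ => p.2 ^ α₁) :=
    continuous_snd.rpow_const fun _ => Or.inr hα₁.1.le
  have hw2 : Continuous (fun p : ℝ × ℝ => p.1 ^ α₂) :=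
    continuous_fst.rpow_const fun _ => Or.inr hα₂.1.le
  have hw1' : ∀ p ∈ Omega, p.2 ^ α₁ ≠ 0 := fun p hp => (Real.rpow_pos_of_pos hp.2.1 _).ne'
  have hw2' : ∀ p ∈ Omega, p.1 ^ α₂ ≠ 0 := fun p hp => (Real.rpow_pos_of_pos hp.1.1 _).ne'
  have key : ∀ (v : ℝ × ℝ) (w g : ℝ × ℝ → ℝ), Continuous w →
      MemLp (fun p => w p * g p) 2 (volume.restrict Omega) → ∀ n,
      MemLp (fun p => w p * (g p - fderiv ℝ (φ n) p v)) 2 (volume.restrict Omega) := by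
    intro v w g hw hwg n
    simp_rw [mul_sub]
    refine hwg.sub ?_
    have hd : Continuous (fun p => fderiv ℝ (φ n) p v) :=
      ((hφ n).1.continuous_fderiv (by simp)).clm_apply continuous_const
    have hc : HasCompactSupport (fun p => fderiv ℝ (φ n) p v) :=
      (hφ n).2.1.fderiv_apply (𝕜 := ℝ) v
    exact (hw.mul hd).memLp_of_hasCompactSupport hc.mul_left
  have hlim0 : Tendsto (fun n : ℕ => ENNReal.ofReal (1 / ((n : ℝ) + 1))) atTop (𝓝 0) := by
    have := ENNReal.tendsto_ofReal (tendsto_one_div_add_atTop_nhds_zero_nat (𝕜 := ℝ))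
    simpa using this
  have sq : ∀ (f : ℕ → ℝ × ℝ → ℝ), (∀ n, MemLp (f n) 2 (volume.restrict Omega)) →
      (∀ n, (∫ p in Omega, (f n p) ^ 2) ≤ (∫ p in Omega, (u p - φ n p) ^ 2) +
        (∫ p in Omega, (p.2 ^ α₁ * (gx p - pdx (φ n) p)) ^ 2) +
        (∫ p in Omega, (p.1 ^ α₂ * (gy p - pdy (φ n) p)) ^ 2)) →
      Tendsto (fun n => eLpNorm (f n) 2 (volume.restrict Omega)) atTop (𝓝 0) := by
    intro f hf hle
    refine tendsto_of_tendsto_of_tendsto_of_le_of_le tendsto_const_nhds hlim0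
      (fun n => zero_le) (fun n => ?_)
    simp only
    rw [aux_eLp (hf n)]
    exact ENNReal.ofReal_le_ofReal ((Real.sqrt_le_sqrt (hle n)).trans (hφn n).le)
  have p1 : ∀ n, 0 ≤ ∫ p in Omega, (u p - φ n p) ^ 2 := fun n =>
    integral_nonneg fun p => sq_nonneg _
  have p2 : ∀ n, 0 ≤ ∫ p in Omega, (p.2 ^ α₁ * (gx p - pdx (φ n) p)) ^ 2 := fun n =>
    integral_nonneg fun p => sq_nonneg _
  have p3 : ∀ n, 0 ≤ ∫ p in Omega, (p.1 ^ α₂ * (gy p - pdy (φ n) p)) ^ 2 := fun n =>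
    integral_nonneg fun p => sq_nonneg _
  have l1 := sq (fun n p => u p - φ n p)
    (fun n => hu2.sub ((hφ n).1.continuous.memLp_of_hasCompactSupport (hφ n).2.1))
    (fun n => by linarith [p1 n, p2 n, p3 n])
  have l2 := sq (fun n p => p.2 ^ α₁ * (gx p - pdx (φ n) p))
    (key (1, 0) _ gx hw1 hwx) (fun n => by linarith [p1 n, p2 n, p3 n])
  have l3 := sq (fun n p => p.1 ^ α₂ * (gy p - pdy (φ n) p))
    (key (0, 1) _ gy hw2 hwy) (fun n => by linarith [p1 n, p2 n, p3 n])
  have bd : ∀ (w g : ℝ × ℝ → ℝ), MemLp (fun p => w p * g p) 2 (volume.restrict Omega) →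
      MemLp (fun p => w p * (deriv F (u p) * g p)) 2 (volume.restrict Omega) := by
    intro w g h
    have e : (fun p => w p * (deriv F (u p) * g p)) = fun p => deriv F (u p) * (w p * g p) := by
      ext p; ring
    rw [e]
    refine h.of_le_mul (c := K) (hdm.mul h.1) (ae_of_all _ fun x => ?_)
    rw [norm_mul]
    gcongr
    exact hK _
  refine ⟨hFu, ⟨hFl, aux_locint hF hK hu2.1 hX.2.1, fun ψ hψ => ?_⟩,
    ⟨hFl, aux_locint hF hK hu2.1 hY.2.1, fun ψ hψ => ?_⟩, bd _ _ hwx, bd _ _ hwy⟩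
  · exact aux_weak (1, 0) _ hw1 hw1' hF hK hL hu2 hFu hX.2.1 hwx.1 φ hφ l1 l2 ψ hψ
  · exact aux_weak (0, 1) _ hw2 hw2' hF hK hL hu2 hFu hY.2.1 hwy.1 φ hφ l1 l3 ψ hψ
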